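/- arXiv:math/0607204 — 3 statements merged into one kernel-verified Lean document; each statement's English description precedes it below -/
import Mathlib

section
/- Let R be a commutative ring, p ≥ 2 a natural number, and a : ℕ → R a function. Let c, α, β ∈ R satisfy α + β = a(p) and α·β = c, and suppose that for every n ≥ 1, a(p·n) = a(p)·a(n) − c·(a(n/p) if p ∣ n, else 0). Define b : ℕ → R by b(n) = a(n) − β·(a(n/p) if p ∣ n, else 0). Then for every r ≥ 0 and every m ≥ 1 with p ∤ m, one has b(p^r · m) = α^r · a(m). (This is the coefficientwise form of the Dirichlet series identity Σ_{n≥1} a_n(f₀) n^{−s} = (Σ_{p∤n} a_n(f) n^{−s}) · (1 − α p^{−s})^{−1}.) -/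
/-- **Dirichlet series of the `p`-stabilization, coefficient by coefficient.**
If `a : ℕ → R` satisfies the Hecke recursion `a(pn) = a(p)a(n) - c·a(n/p)` (with
`a(n/p)` read as `0` unless `p ∣ n`), and `α + β = a(p)`, `α·β = c`, then the
coefficients `b(n) = a(n) - β·a(n/p)` of the `p`-stabilization satisfy
`b(p^r·m) = α^r·a(m)` whenever `m ≥ 1` and `p ∤ m`; this is the coefficientwise form
of `Σ b_n n^{-s} = (Σ_{p∤n} a_n n^{-s})·(1 - α p^{-s})⁻¹`. -/
theorem pStabilization_coefficients
    (R : Type*) [CommRing R] (p : ℕ) (hp : 2 ≤ p) (a : ℕ → R) (c α β : R)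
    (hsum : α + β = a p) (hprod : α * β = c)
    (hrec : ∀ n : ℕ, 1 ≤ n →
      a (p * n) = a p * a n - c * (if p ∣ n then a (n / p) else 0)) :
    ∀ r : ℕ, ∀ m : ℕ, 1 ≤ m → ¬ p ∣ m →
      a (p ^ r * m) - β * (if p ∣ p ^ r * m then a (p ^ r * m / p) else 0) =
        α ^ r * a m := by
  intro r m hm hpm
  have hp0 : 0 < p := by omega
  induction r with
  | zero => simp [hpm]
  | succ k ih =>
    have hn : 1 ≤ p ^ k * m := Nat.mul_pos (pow_pos hp0 k) hm
    have e : p ^ (k + 1) * m = p * (p ^ k * m) := by ring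
    -- `b(pn) = α·b(n)` for `n = p ^ k * m`: the terms `β·a(n)` cancel in
    -- `(α + β)·a(n) - αβ·a(n/p) - β·a(n)`.
    rw [e, if_pos (Dvd.intro _ rfl), Nat.mul_div_cancel_left _ hp0, hrec _ hn,
      ← hsum, ← hprod, pow_succ']
    linear_combination α * ih
end

section
/- Fix a complex number n and integers k ≥ 1, r ≥ 0. For κ ∈ ℕ define the linear operator D_κ on the polynomial ring ℂ[R] by D_κ(P) = n·P + R²·P′ − κ·R·P, where P′ denotes the derivative with respect to R. Define P₀ = 1 and P_{i+1} = D_{k+2i}(P_i) for 0 ≤ i < r. Then P_r = Σ_{j=0}^{r} (−1)^{r−j} · C(r,j) · (Γ(k+r)/Γ(k+j)) · n^j · R^{r−j}, where C(r,j) is the binomial coefficient and Γ(k+r)/Γ(k+j) = (k+j)(k+j+1)···(k+r−1) is the ascending factorial. (Equivalently: the r-fold composition δ_k^{(r)} = δ_{k+2r−2} ∘ ⋯ ∘ δ_k of Shimura's differential operators, acting on q-expansions of nearly holomorphic forms in degree m = 1, satisfies δ_k^{(r)}(qⁿ) = Q(R, n; k, r)·qⁿ with Q(R, n; k, r) = Σ_{j=0}^{r}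 (−1)^{r−j} C(r,j) (Γ(k+r)/Γ(k+j)) R^{r−j} n^j.) -/
/-!
The coefficient of `R ^ m` in `P_r` is shown to be
`(-1)^m C(r,m) (k+r-1)(k+r-2)⋯(k+r-m) n^(r-m)` by induction on `r` (`coeff_shimuraIter`); the
theorem is then a reindexing `j = r - m`. Comparing coefficients in `P_{r+1} = D_{k+2r}(P_r)`
reduces the induction step to
`C(r+1,m+1)(k+r) = C(r,m+1)(k+r-1-m) + (k+2r-m) C(r,m)`,
which follows from Pascal's rule and `(m+1) C(r,m+1) = (r-m) C(r,m)`.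
-/

open Polynomial

/-- The formal Shimura–Maass operator `δ_κ` in degree `m = 1`, acting on the polynomial
coefficient `P(R)` of a monomial `qⁿ · P(R)`:
`D_κ(P) = n·P + R²·P' − κ·R·P`, where `R` is the polynomial variable. -/
noncomputable def shimuraD (n : ℂ) (κ : ℂ) (P : Polynomial ℂ) : Polynomial ℂ :=
  Polynomial.C n * P + X ^ 2 * derivative P - Polynomial.C κ * X * P

/-- The iterates `P₀ = 1`, `P_{i+1} = D_{k+2i}(P_i)`, computing the action of the
`r`-fold composition `δ_k^{(r)} = δ_{k+2r-2} ∘ ⋯ ∘ δ_k` on the exponential `qⁿ`. -/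
noncomputable def shimuraIter (n : ℂ) (k : ℕ) : ℕ → Polynomial ℂ
  | 0 => 1
  | i + 1 => shimuraD n ((k : ℂ) + 2 * (i : ℂ)) (shimuraIter n k i)

lemma coeff_X_mul_derivative (P : Polynomial ℂ) (m : ℕ) :
    (X * derivative P).coeff m = (m : ℂ) * P.coeff m := by
  cases m with
  | zero => simp
  | succ m => rw [coeff_X_mul, coeff_derivative]; push_cast; ring

lemma coeff_shimuraD_zero (n κ : ℂ) (P : Polynomial ℂ) :
    (shimuraD n κ P).coeff 0 = n * P.coeff 0 := by
  simp [shimuraD, mul_coeff_zero]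

lemma coeff_shimuraD_succ (n κ : ℂ) (P : Polynomial ℂ) (m : ℕ) :
    (shimuraD n κ P).coeff (m + 1) = n * P.coeff (m + 1) + ((m : ℂ) - κ) * P.coeff m := by
  have h : shimuraD n κ P = C n * P + X * (X * derivative P) - C κ * (X * P) := by
    unfold shimuraD; ring
  rw [h, coeff_sub, coeff_add, coeff_C_mul, coeff_C_mul, coeff_X_mul, coeff_X_mul,
    coeff_X_mul_derivative]
  ring

/-- For `m > r` both sides vanish, the right-hand one through the binomial coefficient, so the
truncated exponent `r - m` is harmless. -/
lemma coeff_shimuraIter (n : ℂ) (k r m : ℕ) :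
    (shimuraIter n k r).coeff m =
      (-1) ^ m * (r.choose m : ℂ) * (∏ i ∈ Finset.range m, ((k : ℂ) + r - 1 - i)) *
        n ^ (r - m) := by
  induction r generalizing m with
  | zero =>
    cases m with
    | zero => simp [shimuraIter]
    | succ m => simp [shimuraIter, coeff_one]
  | succ r ih =>
    cases m with
    | zero =>
      rw [shimuraIter, coeff_shimuraD_zero, ih]
      simp [pow_succ']
    | succ m =>
      rw [shimuraIter, coeff_shimuraD_succ, ih, ih]
      -- The product for `(r + 1, m + 1)` is the one for `(r, m)` times its leading factor `k + r`.
      have hA : (∏ i ∈ Finset.range (m + 1), ((k : ℂ) + (r + 1 : ℕ) - 1 - i)) =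
          (∏ i ∈ Finset.range m, ((k : ℂ) + r - 1 - i)) * (k + r) := by
        rw [Finset.prod_range_succ']
        congr 1
        · refine Finset.prod_congr rfl fun i _ => ?_
          push_cast; ring
        · push_cast; ring
      rw [hA, Finset.prod_range_succ, Nat.choose_succ_succ, Nat.add_sub_add_right]
      rcases lt_trichotomy r m with h | rfl | h
      · simp [Nat.choose_eq_zero_of_lt h, Nat.choose_eq_zero_of_lt (Nat.lt_succ_of_lt h)]
      · simp only [Nat.choose_self, Nat.choose_succ_self, Nat.sub_self]
        push_cast; ring
      · have hn : n ^ (r - m) = n * n ^ (r - (m + 1)) := by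
          rw [← pow_succ']; congr 1; omega
        have hc : (r.choose (m + 1) : ℂ) * (m + 1) = r.choose m * (r - m) := by
          have := Nat.choose_succ_right_eq r m
          rw [← Nat.cast_sub h.le]
          exact_mod_cast this
        rw [hn, pow_succ]
        push_cast
        linear_combination ((-1) ^ m * (∏ i ∈ Finset.range m, ((k : ℂ) + r - 1 - i)) * n *
          n ^ (r - (m + 1))) * hc

/-- **The universal polynomial `Q(R, n; k, r)` in degree `m = 1` (Shimura).**
`δ_k^{(r)}(qⁿ) = Q(R, n; k, r)·qⁿ` with
`Q(R, n; k, r) = Σ_{j=0}^{r} (−1)^{r−j} C(r,j) (Γ(k+r)/Γ(k+j)) R^{r−j} n^j`,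
where `Γ(k+r)/Γ(k+j) = (k+j)(k+j+1)⋯(k+r−1)`. -/
theorem shimura_universal_polynomial (n : ℂ) (k : ℕ) (hk : 1 ≤ k) (r : ℕ) :
    shimuraIter n k r =
      ∑ j ∈ Finset.range (r + 1),
        Polynomial.C ((-1 : ℂ) ^ (r - j) * (r.choose j : ℂ) *
            (∏ i ∈ Finset.Ico j r, ((k : ℂ) + (i : ℂ))) * n ^ j) *
          X ^ (r - j) := by
  ext m
  rw [coeff_shimuraIter, finsetSum_coeff]
  simp only [coeff_C_mul_X_pow]
  rcases lt_or_ge r m with h | h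
  · rw [Nat.choose_eq_zero_of_lt h, Finset.sum_eq_zero]
    · simp
    · intro j _
      rw [if_neg (by omega)]
  · rw [Finset.sum_eq_single_of_mem (r - m) (Finset.mem_range.2 (by omega))]
    · rw [if_pos (by omega), Nat.sub_sub_self h, Nat.choose_symm h,
        Finset.prod_Ico_eq_prod_range, Nat.sub_sub_self h, ← Finset.prod_range_reflect]
      congr 2
      refine Finset.prod_congr rfl fun i hi => ?_
      have hi := Finset.mem_range.1 hi
      have : ((r - m + i : ℕ) : ℂ) + ((m - 1 - i : ℕ) : ℂ) + 1 = r := by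
        exact_mod_cast (by omega : r - m + i + (m - 1 - i) + 1 = r)
      rw [← this]
      ring
    · intro j hj hne
      have := Finset.mem_range.1 hj
      rw [if_neg (by omega)]
end

section
/- For z in the complex upper half-plane ℍ, let q = e^{2πiz}, define Δ(z) = q · Π_{n≥1} (1 − qⁿ)^{24} (the infinite product converges since |q| < 1), and let E₂(z) = 1 − 24 Σ_{n≥1} σ₁(n) e^{2πinz}, where σ₁(n) = Σ_{d∣n} d is the sum-of-divisors function. Then Δ is complex-differentiable on ℍ and satisfies θΔ = E₂·Δ, i.e., (1/(2πi)) Δ′(z) = E₂(z) · Δ(z) for all z ∈ ℍ. -/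
/-!
On the upper half-plane `Δ = η²⁴`, where `η(z) = e^{2πiz/24} ∏ (1 - qⁿ)` is the Dedekind eta
function, because a convergent product may be raised to the 24th power factor by factor
(`Delta_eq_eta_pow`). Mathlib knows that `η` is holomorphic and non-vanishing there, with
logarithmic derivative `(πi/12) E₂`, obtained by differentiating the product termwise and expanding
each resulting fraction as a geometric (Lambert) series. Hence `Δ` has logarithmic derivative
`24 · (πi/12) E₂ = 2πi E₂`, and what remains is to match the normalised `E₂` of Mathlib with the series
`1 - 24 ∑ σ₁(n) qⁿ` (`E2_eq_mathlib`).
-/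

open Complex

/-- The discriminant function `Δ(z) = q ∏_{n≥1} (1 − qⁿ)²⁴`, `q = e^{2πiz}`. -/
noncomputable def Delta (z : ℂ) : ℂ :=
  Complex.exp (2 * Real.pi * Complex.I * z) *
    ∏' n : ℕ, (1 - Complex.exp (2 * Real.pi * Complex.I * z) ^ (n + 1)) ^ 24

/-- The quasimodular Eisenstein series `E₂(z) = 1 − 24 Σ_{n≥1} σ₁(n) e^{2πinz}`. -/
noncomputable def E2 (z : ℂ) : ℂ :=
  1 - 24 * ∑' n : ℕ, (∑ d ∈ Nat.divisors (n + 1), (d : ℂ)) *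
      Complex.exp (2 * Real.pi * Complex.I * (n + 1) * z)

lemma Delta_eq_eta_pow {z : ℂ} (hz : 0 < z.im) : Delta z = ModularForm.eta z ^ 24 := by
  have h := ModularForm.discriminant_eq_q_prod ⟨z, hz⟩
  simp only [ModularForm.discriminant, ModularForm.eta_q_eq_pow] at h
  simpa [Delta, Function.Periodic.qParam] using h.symm

lemma E2_eq_mathlib {z : ℂ} (hz : 0 < z.im) : E2 z = EisensteinSeries.E2 ⟨z, hz⟩ := by
  rw [EisensteinSeries.E2_eq_tsum_cexp, E2]
  -- Mathlib sums over positive integers; shift the index to start at `0`.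
  rw [tsum_pnat_eq_tsum_succ (f := fun n : ℕ ↦
    (ArithmeticFunction.sigma 1 n : ℂ) * cexp (2 * Real.pi * I * z) ^ n)]
  congr 2
  refine tsum_congr fun n ↦ ?_
  rw [← ModularForm.eta_q_eq_cexp, ModularForm.eta_q_eq_pow, ArithmeticFunction.sigma_one_apply]
  push_cast
  rfl

lemma hasDerivAt_Delta {z : ℂ} (hz : 0 < z.im) :
    HasDerivAt Delta (2 * Real.pi * I * (E2 z * Delta z)) z := by
  have hη : HasDerivAt ModularForm.eta (deriv ModularForm.eta z) z :=
    (ModularForm.differentiableAt_eta_of_mem_upperHalfPlaneSet hz).hasDerivAt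
  have hne : ModularForm.eta z ≠ 0 := ModularForm.eta_ne_zero hz
  have hlog : deriv ModularForm.eta z / ModularForm.eta z = (Real.pi * I / 12) * E2 z := by
    rw [E2_eq_mathlib hz]
    exact ModularForm.logDeriv_eta_eq_E2 ⟨z, hz⟩
  rw [div_eq_iff hne] at hlog
  -- `Delta_eq_eta_pow` holds on the upper half-plane, which is open, hence near `z`.
  have heq : Delta =ᶠ[nhds z] fun w ↦ ModularForm.eta w ^ 24 :=
    Filter.eventually_of_mem (UpperHalfPlane.isOpen_upperHalfPlaneSet.mem_nhds hz)
      fun _ hw ↦ Delta_eq_eta_pow hw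
  refine ((hη.fun_pow 24).congr_of_eventuallyEq heq).congr_deriv ?_
  rw [hlog, Delta_eq_eta_pow hz]
  push_cast
  ring

/-- **Ramanujan's identity `θΔ = E₂Δ`:** the discriminant `Δ` is complex-differentiable
on the upper half-plane and `(1/2πi)·Δ′(z) = E₂(z)·Δ(z)` there. -/
theorem theta_Delta_eq_E2_mul_Delta :
    (∀ z : ℂ, 0 < z.im → DifferentiableAt ℂ Delta z) ∧
    ∀ z : ℂ, 0 < z.im →
      (1 / (2 * Real.pi * Complex.I)) * deriv Delta z = E2 z * Delta z := by
  refine ⟨fun z hz ↦ (hasDerivAt_Delta hz).differentiableAt, fun z hz ↦ ?_⟩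
  rw [(hasDerivAt_Delta hz).deriv, one_div, inv_mul_cancel_left₀ two_pi_I_ne_zero]
end
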